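/- arXiv:1308.1069 — 2 statements merged into one kernel-verified Lean document; each statement's English description precedes it below -/
import Mathlib

section
/- For every finitely supported f : V → ℝ, the coarea formula holds: ∫₀^∞ ‖∂{m ∈ V : |f(m)| > s}‖ ds = Σ_{m∈V} |∇|f||(m), where |f| denotes the function m ↦ |f(m)|. -/
/-!
Both sides reduce to sums over one fixed finite family of adjacent pairs. If `g` vanishes off a finite set
`S`, then `|∇g|` vanishes off the finite set consisting of `S` and its neighbours
(`finsum_gradAbs_eq`). For `s > 0` this applies to the indicator of `{m : |f m| > s}` with
`S = supp f`, and it applies to `|f|` with the same `S`. The integral therefore commutes with the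
finite sums, and what remains is the layer-cake identity
`∫₀^∞ |1_{s < a} - 1_{s < b}| ds = |a - b|` for `a, b ≥ 0` (`integral_layer`), which holds because
the integrand is the indicator of the interval `[min a b, max a b)`.
-/

open scoped BigOperators

/-- The (modulus of the) graph gradient: `|∇g|(m) = ∑_{n ∼ m} |g(m) - g(n)|`. -/
noncomputable def gradAbs {V : Type*} (G : SimpleGraph V) (g : V → ℝ) (m : V) : ℝ :=
  ∑ᶠ n ∈ G.neighborSet m, |g m - g n|

/-- The edge-perimeter `‖∂A‖ = ∑_{m ∈ V} |∇1_A|(m)` of a set of vertices. -/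
noncomputable def edgePerim {V : Type*} (G : SimpleGraph V) (A : Set V) : ℝ :=
  ∑ᶠ m, gradAbs G (A.indicator (fun _ => (1 : ℝ))) m

open MeasureTheory

lemma gradAbs_eq_sum {V : Type*} (G : SimpleGraph V)
    (hfin : ∀ v : V, (G.neighborSet v).Finite) (g : V → ℝ) (m : V) :
    gradAbs G g m = ∑ n ∈ (hfin m).toFinset, |g m - g n| :=
  finsum_mem_eq_finite_toFinset_sum _ (hfin m)

/-- The closed neighbourhood of a finite set in a locally finite graph is finite. -/
lemma closedNeighborhood_finite {V : Type*} (G : SimpleGraph V)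
    (hfin : ∀ v : V, (G.neighborSet v).Finite) {S : Set V} (hS : S.Finite) :
    (S ∪ ⋃ v ∈ S, G.neighborSet v).Finite :=
  hS.union (hS.biUnion fun v _ => hfin v)

/-- The total variation of a function vanishing off `S` is a finite sum over the closed
neighbourhood of `S`, an index set that does not depend on the function. -/
lemma finsum_gradAbs_eq {V : Type*} (G : SimpleGraph V)
    (hfin : ∀ v : V, (G.neighborSet v).Finite) {S : Set V} (hS : S.Finite)
    (g : V → ℝ) (hg : ∀ v, v ∉ S → g v = 0) :
    ∑ᶠ m, gradAbs G g m =
      ∑ m ∈ (closedNeighborhood_finite G hfin hS).toFinset,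
        ∑ n ∈ (hfin m).toFinset, |g m - g n| := by
  rw [finsum_eq_sum_of_support_subset (s := (closedNeighborhood_finite G hfin hS).toFinset)]
  · exact Finset.sum_congr rfl fun m _ => gradAbs_eq_sum G hfin g m
  · intro m hm
    by_contra hmT
    simp only [Set.Finite.coe_toFinset, Set.mem_union, Set.mem_iUnion, not_or, not_exists] at hmT
    apply hm
    rw [gradAbs_eq_sum G hfin]
    refine Finset.sum_eq_zero fun n hn => ?_
    have hmn : G.Adj m n := by simpa using hn
    have hnS : n ∉ S := fun h => hmT.2 n h hmn.symm
    simp [hg m hmT.1, hg n hnS]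

lemma layer_eq_indicator (a b s : ℝ) :
    |(if s < a then (1 : ℝ) else 0) - (if s < b then 1 else 0)| =
      (Set.Ico (min a b) (max a b)).indicator (fun _ => (1 : ℝ)) s := by
  simp only [Set.indicator_apply, Set.mem_Ico, min_le_iff, lt_max_iff]
  by_cases h1 : s < a <;> by_cases h2 : s < b <;> simp [h1, h2, not_le.mpr, le_of_not_gt]

lemma integrableOn_layer (a b : ℝ) :
    IntegrableOn (fun s : ℝ => |(if s < a then (1 : ℝ) else 0) - (if s < b then 1 else 0)|)
      (Set.Ioi 0) := by
  simp only [layer_eq_indicator]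
  apply Integrable.integrableOn
  rw [integrable_indicator_iff measurableSet_Ico]
  exact integrableOn_const (by simp)

lemma integral_layer {a b : ℝ} (ha : 0 ≤ a) (hb : 0 ≤ b) :
    ∫ s in Set.Ioi (0 : ℝ), |(if s < a then (1 : ℝ) else 0) - (if s < b then 1 else 0)| =
      |a - b| := by
  simp only [layer_eq_indicator]
  have hsub : Set.Ici (0 : ℝ) ∩ Set.Ico (min a b) (max a b) = Set.Ico (min a b) (max a b) :=
    Set.inter_eq_right.mpr fun s hs => (le_min ha hb).trans hs.1
  rw [← integral_Ici_eq_integral_Ioi, setIntegral_indicator measurableSet_Ico, hsub]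
  simp [max_sub_min_eq_abs', Measure.real]

/-- Discrete coarea formula: on a countable, locally finite graph, for every finitely
supported `f : V → ℝ` one has
`∫₀^∞ ‖∂{m : |f(m)| > s}‖ ds = ∑_{m ∈ V} |∇|f||(m)`. -/
theorem discrete_coarea
    {V : Type*} [Countable V] (G : SimpleGraph V)
    (hfin : ∀ v : V, (G.neighborSet v).Finite)
    (f : V → ℝ) (hf : (Function.support f).Finite) :
    (∫ s in Set.Ioi (0 : ℝ), edgePerim G {m | s < |f m|}) =
      ∑ᶠ m, gradAbs G (fun x => |f x|) m := by
  have hper : ∀ s ∈ Set.Ioi (0 : ℝ), edgePerim G {m | s < |f m|} =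
      ∑ m ∈ (closedNeighborhood_finite G hfin hf).toFinset, ∑ n ∈ (hfin m).toFinset,
        |(if s < |f m| then (1 : ℝ) else 0) - (if s < |f n| then 1 else 0)| := by
    intro s hs
    rw [edgePerim, finsum_gradAbs_eq G hfin hf]
    · simp only [Set.indicator_apply, Set.mem_ofPred_eq]
    · intro v hv
      have hv0 : f v = 0 := by simpa using hv
      simpa [Set.indicator_apply, hv0] using le_of_lt hs
  rw [setIntegral_congr_fun measurableSet_Ioi hper,
    finsum_gradAbs_eq G hfin hf (fun x => |f x|) (fun v hv => by simpa using hv),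
    integral_finsetSum _ fun m _ => integrable_finsetSum _ fun n _ => integrableOn_layer _ _]
  refine Finset.sum_congr rfl fun m _ => ?_
  rw [integral_finsetSum _ fun n _ => integrableOn_layer _ _]
  exact Finset.sum_congr rfl fun n _ => integral_layer (abs_nonneg _) (abs_nonneg _)
end

section
/- For every real p ≥ 1 and every finitely supported f : V → ℝ one has Σ_{m∈V} |∇(|f|^p)|(m) ≤ Σ_{m∈V} |∇(f·|f|^{p−1})|(m) ≤ 2p · Σ_{m∈V} |f(m)|^{p−1} · |∇f|(m), where |f|^p denotes the function m ↦ |f(m)|^p and f·|f|^{p−1} the function m ↦ f(m)·|f(m)|^{p−1}. -/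
/-!
Write `φ(a) = a |a|^(p-1)`. Both inequalities come from edgewise estimates. Since `|a|^p = |φ(a)|`,
the first one is the reverse triangle inequality. For the second, the tangent-line inequality for
the convex function `t ↦ t^p` (`rpow_sub_rpow_le`) gives
`|φ(a) - φ(b)| ≤ p (|a|^(p-1) + |b|^(p-1)) |a - b|` (`abs_signedPow_sub_le`); summed over ordered
pairs of adjacent vertices, the two terms on the right contribute equally, whence the factor `2p`.

All sums live on the finite set `T` consisting of the support of `f` and its neighbours: an edge
leaving `T` has both endpoints outside the support (`exists_finset_gradAbs`), so the sums are finite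
double sums over `T × T`, where the symmetrization is an exchange of summation.
-/

open scoped BigOperators

/-- Tangent-line inequality for `t ↦ t^p` at `a`, deduced by scaling from Bernoulli's inequality. -/
theorem rpow_sub_rpow_le {p a b : ℝ} (hp : 1 ≤ p) (hb : 0 ≤ b) (hab : b ≤ a) :
    a * a ^ (p - 1) - b * b ^ (p - 1) ≤ p * a ^ (p - 1) * (a - b) := by
  rcases (hb.trans hab).eq_or_lt with ha | ha
  · have : b = 0 := le_antisymm (ha ▸ hab) hb
    subst this
    simp [← ha]
  have mul_pow : ∀ c : ℝ, 0 ≤ c → c * c ^ (p - 1) = c ^ p := fun c hc => by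
    rw [← Real.rpow_one_add' hc (by linarith)]
    congr 1
    ring
  have h := one_add_mul_self_le_rpow_one_add (s := b / a - 1)
    (by have := div_nonneg hb ha.le; linarith) hp
  rw [add_sub_cancel, Real.div_rpow hb ha.le, le_div_iff₀ (Real.rpow_pos_of_pos ha p),
    ← mul_pow a ha.le, ← mul_pow b hb] at h
  have e : (1 + p * (b / a - 1)) * (a * a ^ (p - 1))
      = a * a ^ (p - 1) - p * a ^ (p - 1) * (a - b) := by
    field_simp
    ring
  linarith

theorem abs_signedPow_sub_le_of_abs_le {p a b : ℝ} (hp : 1 ≤ p) (hab : |b| ≤ a) :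
    |a * |a| ^ (p - 1) - b * |b| ^ (p - 1)| ≤
      p * (|a| ^ (p - 1) + |b| ^ (p - 1)) * |a - b| := by
  have ha : 0 ≤ a := (abs_nonneg b).trans hab
  have hyx : |b| ^ (p - 1) ≤ a ^ (p - 1) :=
    Real.rpow_le_rpow (abs_nonneg b) hab (by linarith)
  have hy : 0 ≤ |b| ^ (p - 1) := Real.rpow_nonneg (abs_nonneg b) _
  have hba : b ≤ a := (le_abs_self b).trans hab
  rw [abs_of_nonneg ha, abs_of_nonneg (sub_nonneg.2 hba)]
  have hpy : 0 ≤ p * |b| ^ (p - 1) * (a - b) :=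
    mul_nonneg (mul_nonneg (by linarith) hy) (by linarith)
  rcases le_total 0 b with hb | hb
  · have h := rpow_sub_rpow_le hp hb hba
    rw [abs_of_nonneg hb] at hyx hy hpy ⊢
    rw [abs_of_nonneg (sub_nonneg.2 (mul_le_mul hba hyx hy ha))]
    linarith
  · have h1 : 0 ≤ -b * |b| ^ (p - 1) := mul_nonneg (by linarith) hy
    have h2 : -b * |b| ^ (p - 1) ≤ -b * a ^ (p - 1) :=
      mul_le_mul_of_nonneg_left hyx (by linarith)
    have h3 : 0 ≤ a * a ^ (p - 1) := mul_nonneg ha (hy.trans hyx)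
    have h4 : 0 ≤ (p - 1) * (a ^ (p - 1) * (a - b)) :=
      mul_nonneg (by linarith) (mul_nonneg (hy.trans hyx) (by linarith))
    rw [abs_of_nonneg (by linarith)]
    linarith

/-- By symmetry and oddness of `a ↦ a |a|^(p-1)` one may assume `|b| ≤ a`. -/
theorem abs_signedPow_sub_le {p : ℝ} (hp : 1 ≤ p) (a b : ℝ) :
    |a * |a| ^ (p - 1) - b * |b| ^ (p - 1)| ≤
      p * (|a| ^ (p - 1) + |b| ^ (p - 1)) * |a - b| := by
  wlog hab : |b| ≤ |a| generalizing a b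
  · have h := this b a (le_of_not_ge hab)
    rwa [abs_sub_comm, abs_sub_comm b a, add_comm (|b| ^ (p - 1))] at h
  rcases abs_choice a with ha | ha
  · exact abs_signedPow_sub_le_of_abs_le hp (ha ▸ hab)
  · have h := abs_signedPow_sub_le_of_abs_le (a := -a) (b := -b) hp (by rwa [abs_neg, ← ha])
    rw [abs_neg, abs_neg, neg_mul, neg_mul, ← neg_sub', ← neg_sub', abs_neg, abs_neg] at h
    exact h

open Classical in
/-- For all functions `g` vanishing where `f` does, the gradient is supported on a common finite set
`T`, and only neighbours inside `T` contribute to it. -/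
theorem exists_finset_gradAbs {V : Type*} (G : SimpleGraph V)
    (hfin : ∀ v : V, (G.neighborSet v).Finite) (f : V → ℝ) (hf : (Function.support f).Finite) :
    ∃ T : Finset V, ∀ g : V → ℝ, (∀ x, f x = 0 → g x = 0) →
      (∀ m, m ∉ T → gradAbs G g m = 0) ∧
      ∀ m, gradAbs G g m = ∑ n ∈ T, if G.Adj m n then |g m - g n| else 0 := by
  have hT : (Function.support f ∪ ⋃ s ∈ Function.support f, G.neighborSet s).Finite :=
    hf.union (hf.biUnion fun s _ => hfin s)
  have key : ∀ g : V → ℝ, (∀ x, f x = 0 → g x = 0) → ∀ m n, G.Adj m n →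
      m ∉ hT.toFinset → |g m - g n| = 0 := by
    intro g hg m n hmn hm
    simp only [Set.Finite.mem_toFinset, Set.mem_union, Set.mem_iUnion, not_or, not_exists,
      Function.mem_support, not_not, SimpleGraph.mem_neighborSet] at hm
    have hn : f n = 0 := by
      by_contra h
      exact hm.2 n h hmn.symm
    simp [hg m hm.1, hg n hn]
  refine ⟨hT.toFinset, fun g hg => ⟨fun m hm => ?_, fun m => ?_⟩⟩
  · exact finsum_mem_eq_zero_of_forall_eq_zero fun n hn => key g hg m n hn hm
  · have h : ∀ n, (∑ᶠ _ : n ∈ G.neighborSet m, |g m - g n|)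
        = if G.Adj m n then |g m - g n| else 0 := fun n => finsum_eq_if
    unfold gradAbs
    simp only [h]
    apply finsum_eq_sum_of_support_subset
    intro n hn
    by_contra hnT
    rw [Function.mem_support] at hn
    split_ifs at hn with hmn
    · exact hn (abs_sub_comm (g m) (g n) ▸ key g hg n m hmn.symm hnT)
    · exact hn rfl

/-- Discrete Leibniz-type estimate: on a countable, locally finite graph, for every
real `p ≥ 1` and every finitely supported `f : V → ℝ`,
`∑_m |∇(|f|^p)|(m) ≤ ∑_m |∇(f·|f|^{p-1})|(m) ≤ 2p ∑_m |f(m)|^{p-1} |∇f|(m)`. -/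
theorem discrete_leibniz
    {V : Type*} [Countable V] (G : SimpleGraph V)
    (hfin : ∀ v : V, (G.neighborSet v).Finite)
    (p : ℝ) (hp : 1 ≤ p)
    (f : V → ℝ) (hf : (Function.support f).Finite) :
    (∑ᶠ m, gradAbs G (fun x => |f x| ^ p) m) ≤
        (∑ᶠ m, gradAbs G (fun x => f x * |f x| ^ (p - 1)) m) ∧
      (∑ᶠ m, gradAbs G (fun x => f x * |f x| ^ (p - 1)) m) ≤
        2 * p * ∑ᶠ m, |f m| ^ (p - 1) * gradAbs G f m := by
  classical
  obtain ⟨T, hT⟩ := exists_finset_gradAbs G hfin f hf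
  have toSum : ∀ F : V → ℝ, (∀ m, m ∉ T → F m = 0) → ∑ᶠ m, F m = ∑ m ∈ T, F m := by
    intro F hF
    apply finsum_eq_sum_of_support_subset
    intro m hm
    by_contra h
    exact hm (hF m h)
  obtain ⟨h1, h1'⟩ := hT (fun x => |f x| ^ p) fun x hx => by
    simp [hx, Real.zero_rpow (by linarith : p ≠ 0)]
  obtain ⟨h2, h2'⟩ := hT (fun x => f x * |f x| ^ (p - 1)) fun x hx => by simp [hx]
  obtain ⟨h3, h3'⟩ := hT f fun x hx => hx
  rw [toSum _ h1, toSum _ h2, toSum _ fun m hm => by rw [h3 m hm, mul_zero]]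
  simp only [h1', h2', h3']
  constructor
  · have abs_pow : ∀ a : ℝ, |a| ^ p = |a * |a| ^ (p - 1)| := fun a => by
      rw [abs_mul, abs_of_nonneg (Real.rpow_nonneg (abs_nonneg a) (p - 1)),
        ← Real.rpow_one_add' (abs_nonneg a) (by linarith)]
      congr 1
      ring
    refine Finset.sum_le_sum fun m _ => Finset.sum_le_sum fun n _ => ?_
    split_ifs
    · rw [abs_pow, abs_pow]
      exact abs_abs_sub_abs_le _ _
    · exact le_rfl
  · set D : V → V → ℝ := fun m n => if G.Adj m n then |f m - f n| else 0 with hD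
    have D_symm : ∀ m n, D m n = D n m := fun m n => by
      simp only [hD, G.adj_comm m n, abs_sub_comm (f m)]
    have swap : ∑ m ∈ T, ∑ n ∈ T, |f n| ^ (p - 1) * D m n
        = ∑ m ∈ T, ∑ n ∈ T, |f m| ^ (p - 1) * D m n := by
      rw [Finset.sum_comm]
      simp only [D_symm]
    calc _ ≤ ∑ m ∈ T, ∑ n ∈ T,
          (p * (|f m| ^ (p - 1) * D m n) + p * (|f n| ^ (p - 1) * D m n)) := by
          refine Finset.sum_le_sum fun m _ => Finset.sum_le_sum fun n _ => ?_
          simp only [hD]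
          split_ifs
          · have := abs_signedPow_sub_le hp (f m) (f n)
            linarith
          · simp
      _ = 2 * p * ∑ m ∈ T, |f m| ^ (p - 1) * ∑ n ∈ T, D m n := by
          simp only [Finset.sum_add_distrib, ← Finset.mul_sum] at swap ⊢
          rw [swap]
          ring
end
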